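/- Let q be a real number with 0 < q and q ≠ 1, let h₁, l₁, l₂, α₁, λ be real numbers and t₁, t₂ nonzero reals. Assume λ + α₁ = -N for some positive integer N (so (q^{λ+α₁};q)_n = 0 for all n > N and the series below is a finite sum). Then the function g(x) = x^{-α₁} · Σ_{n=0}^{N} (q^{1/2}/x)^n · (q^{λ+α₁};q)_n · Σ_{k=0}^{n} [(q^{λ+α₁-h₁+l₁};q)_{n-k} / ((q;q)_k (q;q)_{n-k})] · (q^{l₁}t₁)^k · (q^{l₂}t₂)^{n-k} satisfies the variant of the confluent q-hypergeometric equation of type (2,1) for all x > 0. -/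

import Mathlib

/-- The finite q-shifted factorial `(a;q)_n = ∏_{i=0}^{n-1} (1 - a q^i)`. -/
noncomputable def qPoch (q a : ℝ) (n : ℕ) : ℝ :=
  ∏ i ∈ Finset.range n, (1 - a * q ^ i)

/-- The variant of the confluent q-hypergeometric equation of type (2,1) (for `x > 0`). -/
def confEq21 (q h₁ l₁ l₂ α₁ lam t₁ t₂ : ℝ) (g : ℝ → ℝ) : Prop :=
  ∀ x : ℝ, 0 < x →
    (x - q ^ (l₁ - 1/2) * t₁) * (x - q ^ (l₂ - 1/2) * t₂) * g (q * x)
    - q ^ (-h₁ + l₁ + l₂ + 2 * lam - 1/2) * t₂ * (x - q ^ (h₁ + 1/2) * t₁) * g (x / q)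
    - (q ^ (-α₁) * x ^ 2
        - q ^ (l₁ + l₂ + lam - 1/2) * (q ^ (-l₂) * t₁ + (q ^ (-h₁) + q ^ (-l₁)) * t₂) * x
        + q ^ (l₁ + l₂ + lam) * (1 + q⁻¹) * t₁ * t₂) * g x = 0

/-!
Up to the factor `x ^ (-α₁)`, the function `g` is a polynomial `∑ (A;q)_n c_n y ^ n` in
`y = √q / x`, where `A = q ^ (λ + α₁)` and `c_n` are the coefficients of a product `H` of two
`q`-binomial series. The first-order `q`-difference equations of the factors combine to
`(1 - a X) (1 - b X) H(X) = (1 - B b X) H(q X)`, where `a = q ^ l₁ t₁`, `b = q ^ l₂ t₂` and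
`B = q ^ (λ + α₁ - h₁ + l₁)`. Multiplying the `n`-th coefficient by `(A;q)_n` replaces
multiplication by `X` with `f ↦ X (f(X) - A f(q X))`, so it turns this equation into a second-order
one, which is the variant of type (2,1) after the change of variable.
-/

section qPoch

variable {q : ℝ}

lemma qPoch_succ (q a : ℝ) (n : ℕ) : qPoch q a (n + 1) = qPoch q a n * (1 - a * q ^ n) :=
  Finset.prod_range_succ _ _

lemma qPoch_zero_left (q : ℝ) (n : ℕ) : qPoch q 0 n = 1 := by
  simp [qPoch]

lemma qPoch_self_ne_zero (hq : |q| ≠ 1) (n : ℕ) : qPoch q q n ≠ 0 := by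
  refine Finset.prod_ne_zero_iff.2 fun i _ h => hq ?_
  have hpow : q ^ (i + 1) = 1 := by linear_combination -h
  refine (pow_eq_one_iff_of_nonneg (abs_nonneg q) i.succ_ne_zero).1 ?_
  rw [← abs_pow, hpow, abs_one]

lemma qPoch_eq_zero_of_lt {A : ℝ} {N n : ℕ} (hA : A * q ^ N = 1) (hn : N < n) : qPoch q A n = 0 :=
  Finset.prod_eq_zero (Finset.mem_range.2 hn) (sub_eq_zero.2 hA.symm)

end qPoch

section FormalSeries

open PowerSeries

lemma rescale_C {R : Type*} [CommSemiring R] (r c : R) : rescale r (C c) = C c := by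
  ext n
  cases n <;> simp [coeff_C]

lemma coe_comp_C_mul_X {R : Type*} [CommSemiring R] (r : R) (P : Polynomial R) :
    (P.comp (.C r * .X) : PowerSeries R) = rescale r (P : PowerSeries R) := by
  ext n
  rw [Polynomial.coeff_coe, Polynomial.comp_C_mul_X_coeff, coeff_rescale, Polynomial.coeff_coe,
    mul_comm]

variable {q : ℝ}

/-- The `q`-binomial series `∑ (B;q)_n / (q;q)_n (b X) ^ n` in the scaled variable `b X`; for
`B = 0` it is the `q`-exponential series of `b X`. -/
noncomputable def qBinomialSeries (q B b : ℝ) : PowerSeries ℝ :=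
  .mk fun n => qPoch q B n / qPoch q q n * b ^ n

lemma coeff_qBinomialSeries (q B b : ℝ) (n : ℕ) :
    coeff n (qBinomialSeries q B b) = qPoch q B n / qPoch q q n * b ^ n :=
  coeff_mk _ _

lemma coeff_succ_qBinomialSeries (hq : |q| ≠ 1) (B b : ℝ) (n : ℕ) :
    (1 - q ^ (n + 1)) * coeff (n + 1) (qBinomialSeries q B b) =
      (1 - B * q ^ n) * b * coeff n (qBinomialSeries q B b) := by
  have hn := qPoch_self_ne_zero hq n
  have hn' := qPoch_self_ne_zero hq (n + 1)
  rw [coeff_qBinomialSeries, coeff_qBinomialSeries]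
  field_simp
  rw [qPoch_succ, qPoch_succ]
  ring

lemma one_sub_mul_qBinomialSeries (hq : |q| ≠ 1) (B b : ℝ) :
    (1 - C b * X) * qBinomialSeries q B b =
      (1 - C (B * b) * X) * rescale q (qBinomialSeries q B b) := by
  ext n
  simp only [sub_mul, one_mul, mul_assoc, map_sub, coeff_C_mul, coeff_rescale]
  cases n with
  | zero => simp only [coeff_zero_X_mul, pow_zero, one_mul, mul_zero]
  | succ n =>
    simp only [coeff_succ_X_mul, coeff_rescale]
    linear_combination coeff_succ_qBinomialSeries hq B b n

lemma coeff_qBinomialSeries_zero_mul (q a b B : ℝ) (n : ℕ) :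
    coeff n (qBinomialSeries q 0 a * qBinomialSeries q B b) =
      ∑ k ∈ Finset.range (n + 1), qPoch q B (n - k) / (qPoch q q k * qPoch q q (n - k)) *
        a ^ k * b ^ (n - k) := by
  simp only [coeff_mul, coeff_qBinomialSeries, qPoch_zero_left]
  rw [Finset.Nat.sum_antidiagonal_eq_sum_range_succ
    (fun i j => 1 / qPoch q q i * a ^ i * (qPoch q B j / qPoch q q j * b ^ j))]
  exact Finset.sum_congr rfl fun k _ => by ring

lemma qBinomialSeries_zero_mul_functional_eq (hq : |q| ≠ 1) (a b B : ℝ) :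
    (1 - C a * X) * (1 - C b * X) * (qBinomialSeries q 0 a * qBinomialSeries q B b) =
      (1 - C (B * b) * X) * rescale q (qBinomialSeries q 0 a * qBinomialSeries q B b) := by
  have ha : (1 - C a * X) * qBinomialSeries q 0 a = rescale q (qBinomialSeries q 0 a) := by
    simpa using one_sub_mul_qBinomialSeries hq 0 a
  have hb := one_sub_mul_qBinomialSeries hq B b
  rw [mul_mul_mul_comm, ha, hb, map_mul (rescale q)]
  ring

/-- The coefficientwise product of a power series with the sequence `(A;q)_n`, used to raise the
order of a `q`-difference equation. -/
noncomputable def qPochHadamard (q A : ℝ) : PowerSeries ℝ →ₗ[ℝ] PowerSeries ℝ where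
  toFun f := .mk fun n => qPoch q A n * coeff n f
  map_add' f g := by ext n; simp [mul_add]
  map_smul' c f := by ext n; simp [mul_left_comm]

lemma coeff_qPochHadamard (q A : ℝ) (f : PowerSeries ℝ) (n : ℕ) :
    coeff n (qPochHadamard q A f) = qPoch q A n * coeff n f :=
  coeff_mk n fun n => qPoch q A n * coeff n f

lemma qPochHadamard_rescale (q A r : ℝ) (f : PowerSeries ℝ) :
    qPochHadamard q A (rescale r f) = rescale r (qPochHadamard q A f) := by
  ext n
  simp only [coeff_qPochHadamard, coeff_rescale, mul_left_comm]

lemma qPochHadamard_C_mul (q A c : ℝ) (f : PowerSeries ℝ) :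
    qPochHadamard q A (C c * f) = C c * qPochHadamard q A f := by
  simp only [← smul_eq_C_mul, map_smul]

lemma qPochHadamard_X_mul (q A : ℝ) (f : PowerSeries ℝ) :
    qPochHadamard q A (X * f) =
      X * (qPochHadamard q A f - C A * rescale q (qPochHadamard q A f)) := by
  ext n
  cases n with
  | zero => simp [coeff_qPochHadamard]
  | succ n =>
    simp only [coeff_qPochHadamard, coeff_succ_X_mul, map_sub, coeff_C_mul, coeff_rescale,
      qPoch_succ]
    ring

lemma qPochHadamard_functional_eq {a b B : ℝ} {H : PowerSeries ℝ}
    (hH : (1 - C a * X) * (1 - C b * X) * H = (1 - C (B * b) * X) * rescale q H) (A : ℝ) :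
    (1 - C a * X) * (1 - C b * X) * qPochHadamard q A H
      - C (A * b) * X * (C B - C (A * a * q) * X) *
        rescale q (rescale q (qPochHadamard q A H)) =
    (1 - C (A * a + B * b + A * b) * X + C (A * a * b * (1 + q)) * X ^ 2) *
      rescale q (qPochHadamard q A H) := by
  have hexpand : H - C a * (X * H) - C b * (X * H) + C a * (C b * (X * (X * H))) =
      rescale q H - C B * (C b * (X * rescale q H)) := by
    rw [map_mul] at hH
    linear_combination hH
  have htransform := congrArg (qPochHadamard q A) hexpand
  simp only [map_add, map_sub, map_mul, qPochHadamard_C_mul, qPochHadamard_X_mul,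
    qPochHadamard_rescale, rescale_X, rescale_C, map_one] at htransform ⊢
  linear_combination htransform

lemma coe_trunc_qPochHadamard {A : ℝ} {N : ℕ} (hA : A * q ^ N = 1) (f : PowerSeries ℝ) :
    (trunc (N + 1) (qPochHadamard q A f) : PowerSeries ℝ) = qPochHadamard q A f := by
  ext n
  rw [Polynomial.coeff_coe, coeff_trunc, ite_eq_left_iff, coeff_qPochHadamard]
  intro hn
  rw [qPoch_eq_zero_of_lt hA (by lia), zero_mul]

end FormalSeries

/-- The equation that `G` has to satisfy for `x ^ (-α₁) * G (√q / x)` to solve the variant of the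
confluent `q`-hypergeometric equation of type (2,1), in the parameters `a = q ^ l₁ t₁`,
`b = q ^ l₂ t₂`, `A = q ^ (λ + α₁)`, `B = q ^ (λ + α₁ - h₁ + l₁)`. -/
def ReducedConfEq21 (q a b A B : ℝ) (G : ℝ → ℝ) : Prop :=
  ∀ y : ℝ, (1 - a * y) * (1 - b * y) * G y
      - A * b * y * (B - A * a * q * y) * G (q * (q * y)) =
    (1 - (A * a + B * b + A * b) * y + A * a * b * (1 + q) * y ^ 2) * G (q * y)

open Polynomial in
lemma reducedConfEq21_eval {q a b A B : ℝ} {P : ℝ[X]}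
    (hP : (1 - .C a * .X) * (1 - .C b * .X) * (P : PowerSeries ℝ)
        - .C (A * b) * .X * (.C B - .C (A * a * q) * .X) *
          PowerSeries.rescale q (PowerSeries.rescale q (P : PowerSeries ℝ)) =
      (1 - .C (A * a + B * b + A * b) * .X + .C (A * a * b * (1 + q)) * .X ^ 2) *
        PowerSeries.rescale q (P : PowerSeries ℝ)) :
    ReducedConfEq21 q a b A B fun y => P.eval y := by
  have hpoly : (1 - C a * X) * (1 - C b * X) * P
        - C (A * b) * X * (C B - C (A * a * q) * X) * (P.comp (C q * X)).comp (C q * X) =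
      (1 - C (A * a + B * b + A * b) * X + C (A * a * b * (1 + q)) * X ^ 2) *
        P.comp (C q * X) := by
    apply Polynomial.coe_injective
    simpa only [coe_mul, coe_sub, coe_add, coe_one, coe_pow, coe_C, coe_X, coe_comp_C_mul_X]
      using hP
  intro y
  simpa using congrArg (eval y) hpoly

lemma reducedConfEq21_sum {q A : ℝ} (hq : |q| ≠ 1) {N : ℕ} (hA : A * q ^ N = 1) (a b B : ℝ) :
    ReducedConfEq21 q a b A B fun y => ∑ n ∈ Finset.range (N + 1), y ^ n * qPoch q A n *
      ∑ k ∈ Finset.range (n + 1), qPoch q B (n - k) / (qPoch q q k * qPoch q q (n - k)) *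
        a ^ k * b ^ (n - k) := by
  have hformal := qPochHadamard_functional_eq (qBinomialSeries_zero_mul_functional_eq hq a b B) A
  rw [← coe_trunc_qPochHadamard hA] at hformal
  convert reducedConfEq21_eval hformal using 2 with y
  rw [Polynomial.eval, PowerSeries.eval₂_trunc_eq_sum_range]
  refine Finset.sum_congr rfl fun n _ => ?_
  rw [coeff_qPochHadamard, coeff_qBinomialSeries_zero_mul, RingHom.id_apply]
  ring

lemma confEq21_of_reducedConfEq21 {q h₁ l₁ l₂ α₁ lam t₁ t₂ : ℝ} (hq : 0 < q) {G : ℝ → ℝ}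
    (hG : ReducedConfEq21 q (q ^ l₁ * t₁) (q ^ l₂ * t₂) (q ^ (lam + α₁))
      (q ^ (lam + α₁ - h₁ + l₁)) G) :
    confEq21 q h₁ l₁ l₂ α₁ lam t₁ t₂ fun x => x ^ (-α₁) * G (q ^ (1 / 2 : ℝ) / x) := by
  intro x hx
  have hsq : (q ^ (1 / 2 : ℝ)) ^ 2 = q := by
    rw [← Real.sqrt_eq_rpow, Real.sq_sqrt hq.le]
  have hy := hG (q ^ (1 / 2 : ℝ) / (q * x))
  have hqy : q * (q ^ (1 / 2 : ℝ) / (q * x)) = q ^ (1 / 2 : ℝ) / x := by field_simp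
  have hqqy : q * (q ^ (1 / 2 : ℝ) / x) = q ^ (1 / 2 : ℝ) / (x / q) := by field_simp
  rw [hqy, hqqy] at hy
  beta_reduce
  rw [Real.mul_rpow hq.le hx.le, Real.div_rpow hx.le hq.le]
  simp only [Real.rpow_add hq, Real.rpow_sub hq, Real.rpow_neg hq.le, two_mul] at hy ⊢
  have hl₁ := (Real.rpow_pos_of_pos hq l₁).ne'
  have hl₂ := (Real.rpow_pos_of_pos hq l₂).ne'
  have hlam := (Real.rpow_pos_of_pos hq lam).ne'
  have hα₁ := (Real.rpow_pos_of_pos hq α₁).ne'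
  have hh₁ := (Real.rpow_pos_of_pos hq h₁).ne'
  have hs := (Real.rpow_pos_of_pos hq (1 / 2)).ne'
  generalize q ^ l₁ = p, q ^ l₂ = r, q ^ lam = L, q ^ α₁ = u, q ^ h₁ = h,
    q ^ (1 / 2 : ℝ) = s at *
  subst hsq
  -- The variant is `q ^ (-α₁) * x ^ (2 - α₁)` times the reduced equation at `y = √q / (q x)`.
  rw [← sub_eq_zero] at hy
  rw [← mul_zero (x ^ (-α₁) * u⁻¹ * x ^ 2), ← hy]
  field_simp
  ring

theorem stmt12 (q h₁ l₁ l₂ α₁ lam t₁ t₂ : ℝ) (N : ℕ)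
    (hq : 0 < q) (hq1 : q ≠ 1) (ht₁ : t₁ ≠ 0) (ht₂ : t₂ ≠ 0)
    (hN : 0 < N) (hNlam : lam + α₁ = -(N : ℝ)) :
    confEq21 q h₁ l₁ l₂ α₁ lam t₁ t₂ (fun x =>
      x ^ (-α₁) * ∑ n ∈ Finset.range (N + 1),
        (q ^ (1/2 : ℝ) / x) ^ n * qPoch q (q ^ (lam + α₁)) n *
          ∑ k ∈ Finset.range (n + 1),
            qPoch q (q ^ (lam + α₁ - h₁ + l₁)) (n - k) / (qPoch q q k * qPoch q q (n - k)) *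
              (q ^ l₁ * t₁) ^ k * (q ^ l₂ * t₂) ^ (n - k)) := by
  have hA : q ^ (lam + α₁) * q ^ N = 1 := by
    rw [hNlam, Real.rpow_neg hq.le, Real.rpow_natCast, inv_mul_cancel₀ (pow_ne_zero N hq.ne')]
  have habs : |q| ≠ 1 := by rwa [abs_of_pos hq]
  exact confEq21_of_reducedConfEq21 hq (reducedConfEq21_sum habs hA _ _ _)
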